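/- Let α⃗ = (α₁,α₂) with α₁,α₂ > −1, let 1 < p ≤ q < ∞, and let μ be a positive measure on Π⁺×Π⁺. The following are equivalent: (a) there exists C > 0 such that μ(Q_{I₁}×Q_{I₂}) ≤ C (V_{α₁}(Q_{I₁}) V_{α₂}(Q_{I₂}))^{q/p} for all intervals I₁, I₂ ⊂ ℝ; (b) there exists C > 0 such that for every holomorphic f on Π⁺×Π⁺ one has ∫_{Π⁺×Π⁺} |f|^q dμ ≤ C (∫_{Π⁺×Π⁺} |f|^p dV_{α⃗})^{q/p}. -/

import Mathlib

open MeasureTheory Set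
open scoped ENNReal NNReal

noncomputable section

/-- The upper half-plane `Π⁺`. -/
def UHP : Set ℂ := {z : ℂ | 0 < z.im}

/-- The weighted measure `dV_α(x+iy) = y^α dx dy` on the upper half-plane. -/
def Vm (α : ℝ) : Measure ℂ :=
  (volume.restrict UHP).withDensity fun z => ENNReal.ofReal (z.im ^ α)

/-- The Carleson square `Q_I = {x+iy : x ∈ I, 0 < y < |I|}` of the interval `I = (a,b)`. -/
def carlSq (a b : ℝ) : Set ℂ :=
  {z : ℂ | z.re ∈ Set.Ioo a b ∧ z.im ∈ Set.Ioo 0 (b - a)}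

lemma isOpen_UHP : IsOpen UHP := isOpen_lt continuous_const Complex.continuous_im

lemma circle_step {g : ℂ → ℂ} {z : ℂ} {R : ℝ} (hg : DifferentiableOn ℂ g (Metric.ball z R))
    {r : ℝ} (hr : 0 < r) (hrR : r < R) :
    ENNReal.ofReal (2 * Real.pi) * ‖g z‖ₑ ≤
      ∫⁻ θ in Ioo (-Real.pi) Real.pi, ‖g (z + Complex.polarCoord.symm (r, θ))‖ₑ := by
  have h1 : Real.circleAverage g z r = g z := by
    apply DiffContOnCl.circleAverage
    apply DifferentiableOn.diffContOnCl
    rw [abs_of_pos hr]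
    exact hg.mono (Metric.closure_ball_subset_closedBall.trans
      (Metric.closedBall_subset_ball hrR))
  have hper : Function.Periodic (fun θ => g (circleMap z r θ)) (2 * Real.pi) := by
    intro θ
    simp only [periodic_circleMap z r θ]
  have h2 : ∫ θ in (-Real.pi)..Real.pi, g (circleMap z r θ) = (2 * Real.pi : ℝ) • g z := by
    have := hper.intervalIntegral_add_eq (-Real.pi) 0
    rw [show -Real.pi + 2 * Real.pi = Real.pi by ring, zero_add] at this
    rw [this, ← h1, Real.circleAverage, smul_smul, mul_inv_cancel₀ (by positivity), one_smul]
  have h3 : ENNReal.ofReal (2 * Real.pi) * ‖g z‖ₑ = ‖(2 * Real.pi : ℝ) • g z‖ₑ := by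
    rw [enorm_smul, Real.enorm_of_nonneg (by positivity)]
  rw [h3, ← h2, intervalIntegral.integral_of_le (by linarith [Real.pi_pos]),
    integral_Ioc_eq_integral_Ioo]
  refine (enorm_integral_le_lintegral_enorm _).trans_eq ?_
  congr 1; ext θ
  congr 3
  rw [Complex.polarCoord_symm_apply, circleMap, Complex.exp_mul_I]
  simp

lemma ball_step {g : ℂ → ℂ} {z : ℂ} {R : ℝ} (hR : 0 < R)
    (hg : DifferentiableOn ℂ g (Metric.ball z R)) :
    ENNReal.ofReal (Real.pi * R ^ 2 / 2) * ‖g z‖ₑ ≤ ∫⁻ w in Metric.ball z R, ‖g w‖ₑ := by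
  set G : ℂ → ℝ≥0∞ := (Metric.ball z R).indicator (fun w => ‖g w‖ₑ) with hG
  have hGm : Measurable G := by
    have h : ContinuousOn (fun w => ‖g w‖ₑ) (Metric.ball z R) := hg.continuousOn.enorm
    classical
    have := h.measurable_piecewise (continuousOn_const (c := (0:ℝ≥0∞))) Metric.isOpen_ball.measurableSet
    rwa [show (Metric.ball z R).piecewise (fun w => ‖g w‖ₑ) (fun _ => 0) = G from
      piecewise_eq_indicator] at this
  have h1 : ∫⁻ w in Metric.ball z R, ‖g w‖ₑ = ∫⁻ w, G (z + w) := by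
    rw [lintegral_add_left_eq_self G z, lintegral_indicator Metric.isOpen_ball.measurableSet]
  have hps : Measurable Complex.polarCoord.symm := by
    have : (Complex.polarCoord.symm : ℝ × ℝ → ℂ) = fun p => p.1 * (Real.cos p.2 + Real.sin p.2 * Complex.I) := by
      ext p; rw [Complex.polarCoord_symm_apply]
    rw [this]; fun_prop
  rw [h1, ← Complex.lintegral_comp_polarCoord_symm, polarCoord_target,
    Measure.volume_eq_prod, ← Measure.prod_restrict, lintegral_prod _ (by fun_prop)]
  calc _ = ∫⁻ r in Ioo (R/2) R, ENNReal.ofReal (R / 2) * (ENNReal.ofReal (2 * Real.pi) * ‖g z‖ₑ) := by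
        rw [lintegral_const, Measure.restrict_apply_univ, Real.volume_Ioo, mul_comm _ (ENNReal.ofReal (R - R/2)),
          ← mul_assoc, ← mul_assoc, ← ENNReal.ofReal_mul (by linarith), ← ENNReal.ofReal_mul (by nlinarith)]
        congr 2; ring
    _ ≤ ∫⁻ r in Ioo (R/2) R, ∫⁻ θ in Ioo (-Real.pi) Real.pi, ENNReal.ofReal r • G (z + Complex.polarCoord.symm (r, θ)) := by
        refine setLIntegral_mono' measurableSet_Ioo fun r hr => ?_
        have hr0 : 0 < r := by linarith [hr.1]
        simp only [smul_eq_mul]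
        rw [lintegral_const_mul _ (by fun_prop)]
        gcongr
        · exact hr.1.le
        refine (circle_step hg hr0 hr.2).trans_eq ?_
        congr 1; ext θ
        rw [hG, indicator_of_mem]
        simp [hr.2, abs_of_pos hr0]
    _ ≤ _ := lintegral_mono_set (fun r hr => by simp at hr ⊢; linarith)

lemma jensen_step {s : Set ℂ} {h : ℂ → ℂ} (hh : AEStronglyMeasurable h (volume.restrict s))
    {p : ℝ} (hp : 1 ≤ p) :
    (∫⁻ w in s, ‖h w‖ₑ) ^ p ≤ (∫⁻ w in s, ‖h w‖ₑ ^ p) * volume s ^ (p - 1) := by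
  have := eLpNorm_le_eLpNorm_mul_rpow_measure_univ (μ := volume.restrict s) (f := h) (p := 1)
    (q := ENNReal.ofReal p) (by simpa using hp) hh
  have hp0 : 0 < p := by linarith
  rw [eLpNorm_one_eq_lintegral_enorm, eLpNorm_eq_lintegral_rpow_enorm_toReal (by simpa using hp0) (by simp)] at this
  simp only [ENNReal.toReal_ofReal hp0.le, Measure.restrict_apply_univ, ENNReal.toReal_one] at this
  calc _ ≤ _ := ENNReal.rpow_le_rpow this hp0.le
    _ = _ := by
      rw [ENNReal.mul_rpow_of_nonneg _ _ hp0.le, ← ENNReal.rpow_mul, ← ENNReal.rpow_mul]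
      congr 2
      · rw [one_div_mul_cancel hp0.ne', ENNReal.rpow_one]
      · field_simp

lemma submean_vol {g : ℂ → ℂ} {z : ℂ} {R : ℝ} (hR : 0 < R)
    (hg : DifferentiableOn ℂ g (Metric.ball z R)) {p : ℝ} (hp : 1 ≤ p) :
    ‖g z‖ₑ ^ p ≤ ENNReal.ofReal (2 ^ p / (Real.pi * R ^ 2)) * ∫⁻ w in Metric.ball z R, ‖g w‖ₑ ^ p := by
  have hp0 : 0 < p := by linarith
  have h1 := ball_step hR hg
  have h2 := jensen_step (s := Metric.ball z R) (h := g)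
    (hg.continuousOn.aestronglyMeasurable Metric.isOpen_ball.measurableSet) hp
  have h3 := (ENNReal.rpow_le_rpow h1 hp0.le).trans h2
  have hA : 0 < Real.pi * R ^ 2 := by positivity
  set A := Real.pi * R ^ 2 with hAd
  have hv : volume (Metric.ball z R) = ENNReal.ofReal A := by
    rw [Complex.volume_ball, ← ENNReal.ofReal_pow hR.le, hAd, mul_comm, ENNReal.ofReal_mul (by positivity)]
    congr 1
    rw [← ENNReal.ofReal_coe_nnreal]; rfl
  rw [hv, ENNReal.mul_rpow_of_nonneg _ _ hp0.le, ENNReal.ofReal_rpow_of_pos (by positivity),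
    ENNReal.ofReal_rpow_of_pos hA] at h3
  have h4 : ENNReal.ofReal ((A/2)^p)⁻¹ * ENNReal.ofReal ((A/2)^p) = 1 := by
    rw [← ENNReal.ofReal_mul (by positivity), inv_mul_cancel₀ (by positivity), ENNReal.ofReal_one]
  calc ‖g z‖ₑ ^ p = ENNReal.ofReal ((A/2)^p)⁻¹ * (ENNReal.ofReal ((A/2)^p) * ‖g z‖ₑ ^ p) := by
        rw [← mul_assoc, h4, one_mul]
    _ ≤ ENNReal.ofReal ((A/2)^p)⁻¹ * ((∫⁻ w in Metric.ball z R, ‖g w‖ₑ ^ p) * ENNReal.ofReal (A ^ (p - 1))) := by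
      gcongr
    _ = _ := by
      rw [mul_comm (lintegral _ _), ← mul_assoc, ← ENNReal.ofReal_mul (by positivity)]
      congr 2
      rw [Real.div_rpow hA.le (by norm_num), Real.rpow_sub hA, Real.rpow_one]
      field_simp

lemma measurable_dens (α : ℝ) : Measurable fun z : ℂ => ENNReal.ofReal (z.im ^ α) := by
  have : Measurable fun z : ℂ => z.im := Complex.measurable_im
  fun_prop

instance sfinite_Vm (α : ℝ) : SFinite (Vm α) := by unfold Vm; infer_instance

lemma lintegral_Vm (α : ℝ) {s : Set ℂ} (hs : MeasurableSet s) (hsU : s ⊆ UHP) (g : ℂ → ℝ≥0∞) :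
    ∫⁻ w in s, g w ∂(Vm α) = ∫⁻ w in s, ENNReal.ofReal (w.im ^ α) * g w := by
  unfold Vm
  rw [restrict_withDensity hs, Measure.restrict_restrict hs, inter_eq_left.2 hsU,
    lintegral_withDensity_eq_lintegral_mul_non_measurable _ (measurable_dens α)]
  · rfl
  · exact Filter.Eventually.of_forall fun _ => ENNReal.ofReal_lt_top

lemma lintegral_Vm_univ (α : ℝ) (g : ℂ → ℝ≥0∞) :
    ∫⁻ w, g w ∂(Vm α) = ∫⁻ w in UHP, ENNReal.ofReal (w.im ^ α) * g w := by
  rw [← lintegral_Vm α isOpen_UHP.measurableSet subset_rfl]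
  unfold Vm
  rw [restrict_withDensity isOpen_UHP.measurableSet, Measure.restrict_restrict isOpen_UHP.measurableSet,
    inter_self]

lemma Vm_scale (α : ℝ) {L : ℝ} (hL : 0 < L) (a : ℝ) {g : ℂ → ℝ≥0∞} (hg : Measurable g) :
    ∫⁻ w, g w ∂(Vm α) = ENNReal.ofReal (L ^ (2 + α)) * ∫⁻ w, g (L * w + a) ∂(Vm α) := by
  rw [lintegral_Vm_univ, lintegral_Vm_univ, ← lintegral_indicator isOpen_UHP.measurableSet,
    ← lintegral_indicator isOpen_UHP.measurableSet]
  set F : ℂ → ℝ≥0∞ := UHP.indicator fun w => ENNReal.ofReal (w.im ^ α) * g w with hF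
  have hFm : Measurable F := ((measurable_dens α).mul hg).indicator isOpen_UHP.measurableSet
  have h1 : ∫⁻ w, F w = ∫⁻ w, F (w + a) := (lintegral_add_right_eq_self F (a : ℂ)).symm
  have h2 : ∫⁻ w, F (w + a) = ENNReal.ofReal (L ^ 2) * ∫⁻ w, F (L • w + a) := by
    have hm : Measurable fun w => F (w + a) := by fun_prop
    have := lintegral_map (μ := (volume : Measure ℂ)) hm (measurable_const_smul L)
    rw [Measure.map_addHaar_smul _ hL.ne', lintegral_smul_measure] at this
    rw [← this, Complex.finrank_real_complex, smul_eq_mul, ← mul_assoc, ← ENNReal.ofReal_mul (by positivity),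
      abs_of_pos (by positivity), mul_inv_cancel₀ (by positivity), ENNReal.ofReal_one, one_mul]
  have h3 : ∀ w : ℂ, F (L • w + a) = ENNReal.ofReal (L ^ α) *
      UHP.indicator (fun w => ENNReal.ofReal (w.im ^ α) * g (L * w + a)) w := by
    intro w
    have him : (L • w + (a : ℂ)).im = L * w.im := by simp
    by_cases hw : w ∈ UHP
    · have hw' : (L • w + (a:ℂ)) ∈ UHP := by
        change 0 < (L • w + (a:ℂ)).im; rw [him]; exact mul_pos hL hw
      rw [hF, indicator_of_mem hw', indicator_of_mem hw, him, Real.mul_rpow hL.le (le_of_lt hw),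
        ENNReal.ofReal_mul (by positivity), mul_assoc, Complex.real_smul]
    · have hw' : (L • w + (a:ℂ)) ∉ UHP := by
        change ¬ 0 < (L • w + (a:ℂ)).im; rw [him]; intro h; exact hw (pos_of_mul_pos_right h hL.le)
      rw [hF, indicator_of_notMem hw', indicator_of_notMem hw, mul_zero]
  rw [h1, h2]
  simp_rw [h3]
  rw [lintegral_const_mul' _ _ ENNReal.ofReal_ne_top, ← mul_assoc, ← ENNReal.ofReal_mul (by positivity),
    Real.rpow_add hL, Real.rpow_two]

lemma measurableSet_carlSq (a b : ℝ) : MeasurableSet (carlSq a b) :=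
  ((isOpen_Ioo.preimage Complex.continuous_re).inter
    (isOpen_Ioo.preimage Complex.continuous_im)).measurableSet

lemma Vm_carlSq (α : ℝ) {a b : ℝ} (h : a < b) :
    Vm α (carlSq a b) = ENNReal.ofReal ((b - a) ^ (2 + α)) * Vm α (carlSq 0 1) := by
  have hL : 0 < b - a := by linarith
  rw [← lintegral_indicator_one (measurableSet_carlSq a b), ← lintegral_indicator_one (measurableSet_carlSq 0 1),
    Vm_scale α hL a (measurable_one.indicator (measurableSet_carlSq a b))]
  congr 2; ext w
  have : ((b - a : ℝ) * w + a ∈ carlSq a b) ↔ w ∈ carlSq 0 1 := by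
    simp only [carlSq, mem_ofPred_eq, mem_Ioo, Complex.add_re, Complex.add_im, Complex.mul_re, Complex.mul_im,
      Complex.ofReal_re, Complex.ofReal_im, zero_mul, sub_zero, add_zero]
    constructor
    · rintro ⟨⟨h1, h2⟩, h3, h4⟩
      refine ⟨⟨?_, ?_⟩, ?_, ?_⟩ <;> by_contra hc <;> push Not at hc <;> nlinarith
    · rintro ⟨⟨h1, h2⟩, h3, h4⟩
      refine ⟨⟨?_, ?_⟩, ?_, ?_⟩ <;> nlinarith
  by_cases hw : w ∈ carlSq 0 1
  · rw [indicator_of_mem hw, indicator_of_mem (this.2 hw)]; simp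
  · rw [indicator_of_notMem hw, indicator_of_notMem (fun h => hw (this.1 h))]

lemma Vm_carlSq_pos (α : ℝ) : Vm α (carlSq 0 1) ≠ 0 := by
  have hsub : carlSq 0 1 ⊆ UHP := fun z hz => hz.2.1
  rw [← setLIntegral_one, lintegral_Vm α (measurableSet_carlSq 0 1) hsub]
  intro h
  have h0 := (setLIntegral_eq_zero_iff (measurableSet_carlSq 0 1)
    ((measurable_dens α).mul measurable_const)).1 h
  have hop : IsOpen (carlSq 0 1) := (isOpen_Ioo.preimage Complex.continuous_re).inter
    (isOpen_Ioo.preimage Complex.continuous_im)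
  have hne : (carlSq 0 1).Nonempty := ⟨⟨1/2, 1/2⟩, by simp [carlSq]; norm_num⟩
  refine (hop.measure_pos volume hne).ne' ?_
  rw [measure_eq_zero_iff_ae_notMem]
  filter_upwards [h0] with z hz hzm
  have h2 : ENNReal.ofReal (z.im ^ α) * 1 = 0 := hz hzm
  rw [mul_one, ENNReal.ofReal_eq_zero] at h2
  exact absurd (Real.rpow_pos_of_pos hzm.2.1 α) (not_lt.2 h2)

lemma submean_Vm (α : ℝ) {p : ℝ} (hp : 1 ≤ p) : ∃ K : ℝ, 0 < K ∧ ∀ g : ℂ → ℂ, DifferentiableOn ℂ g UHP →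
    ∀ z ∈ UHP, ‖g z‖ₑ ^ p ≤ ENNReal.ofReal K * ENNReal.ofReal (z.im ^ (-(2 + α))) *
      ∫⁻ w in Metric.ball z (z.im / 2), ‖g w‖ₑ ^ p ∂(Vm α) := by
  set c : ℝ := min ((1/2 : ℝ) ^ α) ((3/2 : ℝ) ^ α) with hc
  have hc0 : 0 < c := lt_min (by positivity) (by positivity)
  refine ⟨2 ^ p / (Real.pi / 4) * c⁻¹, by positivity, fun g hg z hz => ?_⟩
  have hy : 0 < z.im := hz
  have him : ∀ w ∈ Metric.ball z (z.im / 2), z.im / 2 < w.im ∧ w.im < 3 / 2 * z.im := by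
    intro w hw
    rw [Metric.mem_ball, dist_eq_norm] at hw
    have := (Complex.abs_im_le_norm (w - z)).trans_lt hw
    rw [Complex.sub_im, abs_lt] at this
    constructor <;> linarith
  have hsub : Metric.ball z (z.im / 2) ⊆ UHP := fun w hw => by
    change 0 < w.im; linarith [him w hw]
  refine (submean_vol (half_pos hy) (hg.mono hsub) hp).trans ?_
  rw [lintegral_Vm α Metric.isOpen_ball.measurableSet hsub]
  have hden : ∀ w ∈ Metric.ball z (z.im / 2), c * z.im ^ α ≤ w.im ^ α := by
    intro w hw
    obtain ⟨h1, h2⟩ := him w hw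
    have hw0 : 0 < w.im := by linarith
    rcases le_total 0 α with h | h
    · calc c * z.im ^ α ≤ (1/2 : ℝ) ^ α * z.im ^ α := by gcongr; exact min_le_left _ _
        _ = (1/2 * z.im) ^ α := (Real.mul_rpow (by norm_num) hy.le).symm
        _ ≤ _ := Real.rpow_le_rpow (by positivity) (by linarith) h
    · calc c * z.im ^ α ≤ (3/2 : ℝ) ^ α * z.im ^ α := by gcongr; exact min_le_right _ _
        _ = (3/2 * z.im) ^ α := (Real.mul_rpow (by norm_num) hy.le).symm
        _ ≤ _ := Real.rpow_le_rpow_of_nonpos hw0 h2.le h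
  calc _ = ENNReal.ofReal (2 ^ p / (Real.pi / 4) * c⁻¹) * ENNReal.ofReal (z.im ^ (-(2 + α))) *
      ∫⁻ w in Metric.ball z (z.im / 2), ENNReal.ofReal (c * z.im ^ α) * ‖g w‖ₑ ^ p := by
        rw [lintegral_const_mul' _ _ ENNReal.ofReal_ne_top, ← mul_assoc, ← ENNReal.ofReal_mul (by positivity),
          ← ENNReal.ofReal_mul (by positivity)]
        congr 2
        rw [Real.rpow_neg hy.le, Real.rpow_add hy, Real.rpow_two]
        have := Real.rpow_pos_of_pos hy α
        field_simp
        norm_num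
    _ ≤ _ := by
        refine mul_le_mul' le_rfl ?_
        refine setLIntegral_mono' Metric.isOpen_ball.measurableSet fun w hw => ?_
        gcongr
        exact hden w hw

/-- The normalised test function attached to the interval `(a,b)`. -/
def tst (N : ℕ) (a b : ℝ) (z : ℂ) : ℂ :=
  (((b - a : ℝ) : ℂ) / (z - a + (b - a : ℝ) * Complex.I)) ^ N

lemma tst_lower (N : ℕ) {a b : ℝ} {z : ℂ} (hz : z ∈ carlSq a b) :
    ENNReal.ofReal ((1 / 3 : ℝ) ^ N) ≤ ‖tst N a b z‖ₑ := by
  obtain ⟨⟨h1, h2⟩, h3, h4⟩ := hz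
  have hL : 0 < b - a := by linarith
  rw [← ofReal_norm]
  apply ENNReal.ofReal_le_ofReal
  rw [tst, norm_pow, norm_div, Complex.norm_real, Real.norm_of_nonneg hL.le]
  have hn : ‖z - a + (b - a : ℝ) * Complex.I‖ ≤ 3 * (b - a) := by
    refine (Complex.norm_le_abs_re_add_abs_im _).trans ?_
    have e1 : (z - a + (b - a : ℝ) * Complex.I).re = z.re - a := by simp
    have e2 : (z - a + (b - a : ℝ) * Complex.I).im = z.im + (b - a) := by simp
    rw [e1, e2, abs_of_pos (by linarith), abs_of_pos (by linarith)]
    linarith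
  have hn0 : 0 < ‖z - a + (b - a : ℝ) * Complex.I‖ := by
    rw [norm_pos_iff]
    intro h0
    have e2 : (z - a + (b - a : ℝ) * Complex.I).im = z.im + (b - a) := by simp
    rw [h0, Complex.zero_im] at e2
    linarith
  apply pow_le_pow_left₀ (by norm_num)
  rw [le_div_iff₀ hn0]
  linarith

lemma tst_diff (N : ℕ) {a b : ℝ} (h : a < b) : DifferentiableOn ℂ (tst N a b) UHP := by
  unfold tst
  refine DifferentiableOn.pow (DifferentiableOn.div (by fun_prop) (by fun_prop) ?_) _
  intro z hz h0
  have hz' : 0 < z.im := hz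
  have e2 : (z - a + (b - a : ℝ) * Complex.I).im = z.im + (b - a) := by simp
  rw [h0, Complex.zero_im] at e2
  linarith

lemma tst_meas (N : ℕ) (a b : ℝ) : Measurable (tst N a b) := by
  unfold tst
  fun_prop

lemma tst_finite (α : ℝ) (hα : -1 < α) {p : ℝ} (hp : 1 ≤ p) :
    ∃ N : ℕ, ∫⁻ z, ‖tst N 0 1 z‖ₑ ^ p ∂(Vm α) ≠ ∞ := by
  obtain ⟨n, hn⟩ := exists_nat_gt (α + 2)
  refine ⟨n + 2, ?_⟩
  set A : ℝ → ℝ≥0∞ := fun x => ENNReal.ofReal ((1 + x ^ 2)⁻¹) with hA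
  set B : ℝ → ℝ≥0∞ := (Ioi 0).indicator fun y => ENNReal.ofReal (y ^ α * ((1 + y) ^ n)⁻¹) with hB
  have hAm : Measurable A := by fun_prop
  have hBm : Measurable B := Measurable.indicator (by fun_prop) measurableSet_Ioi
  have hAf : ∫⁻ x, A x < ∞ := integrable_inv_one_add_sq.lintegral_lt_top
  have hBf : ∫⁻ y, B y < ∞ := by
    rw [hB, lintegral_indicator measurableSet_Ioi]
    have hu : Ioi (0:ℝ) = Ioc 0 1 ∪ Ioi 1 := (Ioc_union_Ioi_eq_Ioi zero_le_one).symm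
    have i1 : IntegrableOn (fun y : ℝ => y ^ α) (Ioc 0 1) :=
      (intervalIntegrable_iff_integrableOn_Ioc_of_le zero_le_one).1
        (intervalIntegral.intervalIntegrable_rpow' hα)
    have i2 : IntegrableOn (fun y : ℝ => y ^ (α - n)) (Ioi 1) :=
      integrableOn_Ioi_rpow_of_lt (by linarith) one_pos
    rw [hu]
    refine (lintegral_union_le _ _ _).trans_lt (ENNReal.add_lt_top.2 ⟨?_, ?_⟩)
    · refine lt_of_le_of_lt ?_ i1.lintegral_lt_top
      refine setLIntegral_mono' measurableSet_Ioc fun y hy => ENNReal.ofReal_le_ofReal ?_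
      have hy0 : 0 < y := hy.1
      have := Real.rpow_pos_of_pos hy0 α
      refine mul_le_of_le_one_right this.le (inv_le_one_of_one_le₀ (one_le_pow₀ (by linarith)))
    · refine lt_of_le_of_lt ?_ i2.lintegral_lt_top
      refine setLIntegral_mono' measurableSet_Ioi fun y hy => ENNReal.ofReal_le_ofReal ?_
      have hy0 : 0 < y := lt_trans one_pos hy
      rw [Real.rpow_sub hy0, Real.rpow_natCast, div_eq_mul_inv]
      gcongr
      linarith
  have hprod : ∫⁻ z : ℂ, A z.re * B z.im = (∫⁻ x, A x) * ∫⁻ y, B y := by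
    rw [← lintegral_prod_mul hAm.aemeasurable hBm.aemeasurable, ← Measure.volume_eq_prod,
      ← Complex.volume_preserving_equiv_real_prod.lintegral_comp (by fun_prop)]
    rfl
  refine ne_top_of_le_ne_top (ENNReal.mul_lt_top hAf hBf).ne ?_
  rw [← hprod, lintegral_Vm_univ, ← lintegral_indicator isOpen_UHP.measurableSet]
  refine lintegral_mono fun z => ?_
  by_cases hz : z ∈ UHP
  swap
  · rw [indicator_of_notMem hz]; exact zero_le
  have hy : 0 < z.im := hz
  rw [indicator_of_mem hz, hB, indicator_of_mem (show z.im ∈ Ioi 0 from hy)]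
  have ez : tst (n + 2) 0 1 z = ((z + Complex.I)⁻¹) ^ (n + 2) := by simp [tst]
  have hsq : ‖z + Complex.I‖ ^ 2 = z.re ^ 2 + (1 + z.im) ^ 2 := by
    rw [← Complex.normSq_eq_norm_sq, Complex.normSq_apply]; simp; ring
  have hge : 1 + z.im ≤ ‖z + Complex.I‖ := by
    apply le_of_sq_le_sq _ (norm_nonneg _)
    rw [hsq]; nlinarith [sq_nonneg z.re]
  have hge2 : 1 + z.re ^ 2 ≤ ‖z + Complex.I‖ ^ 2 := by rw [hsq]; nlinarith
  have hle : ‖tst (n + 2) 0 1 z‖ ≤ ((1 + z.im) ^ n)⁻¹ * (1 + z.re ^ 2)⁻¹ := by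
    rw [ez, norm_pow, norm_inv, inv_pow, pow_add, mul_inv]
    gcongr
  have hle1 : ‖tst (n + 2) 0 1 z‖ ≤ 1 := by
    rw [ez, norm_pow, norm_inv]
    exact pow_le_one₀ (by positivity) (inv_le_one_of_one_le₀ (by linarith))
  have hfin : ‖tst (n + 2) 0 1 z‖ₑ ^ p ≤ ENNReal.ofReal (((1 + z.im) ^ n)⁻¹ * (1 + z.re ^ 2)⁻¹) := by
    rw [← ofReal_norm, ENNReal.ofReal_rpow_of_nonneg (norm_nonneg _) (by linarith)]
    apply ENNReal.ofReal_le_ofReal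
    refine le_trans ?_ hle
    calc _ ≤ ‖tst (n + 2) 0 1 z‖ ^ (1:ℝ) :=
          Real.rpow_le_rpow_of_exponent_ge' (norm_nonneg _) hle1 zero_le_one hp
      _ = _ := Real.rpow_one _
  calc _ ≤ ENNReal.ofReal (z.im ^ α) * ENNReal.ofReal (((1 + z.im) ^ n)⁻¹ * (1 + z.re ^ 2)⁻¹) := by gcongr
    _ = _ := by
      have := Real.rpow_pos_of_pos hy α
      rw [hA, ← ENNReal.ofReal_mul (by positivity), ← ENNReal.ofReal_mul (by positivity)]
      congr 1; ring

lemma tst_scale (α : ℝ) (N : ℕ) {a b : ℝ} (h : a < b) (p : ℝ) :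
    ∫⁻ z, ‖tst N a b z‖ₑ ^ p ∂(Vm α) =
      ENNReal.ofReal ((b - a) ^ (2 + α)) * ∫⁻ z, ‖tst N 0 1 z‖ₑ ^ p ∂(Vm α) := by
  have hL : 0 < b - a := by linarith
  rw [Vm_scale α hL a ((tst_meas N a b).enorm.pow_const p)]
  congr 2; ext w
  congr 2
  have hL' : ((b - a : ℝ) : ℂ) ≠ 0 := by exact_mod_cast hL.ne'
  simp only [tst]
  congr 1
  rw [show ((b - a : ℝ) : ℂ) * w + a - a + (b - a : ℝ) * Complex.I = ((b - a : ℝ) : ℂ) * (w + Complex.I) by ring,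
    ← div_div, div_self hL']
  simp

lemma Vm_carlSq_fin (α : ℝ) (hα : -1 < α) : Vm α (carlSq 0 1) ≠ ∞ := by
  obtain ⟨N, hN⟩ := tst_finite α hα le_rfl
  have h1 : ENNReal.ofReal ((1 / 3 : ℝ) ^ N) * Vm α (carlSq 0 1) ≤ ∫⁻ z, ‖tst N 0 1 z‖ₑ ^ (1:ℝ) ∂(Vm α) := by
    calc _ = ∫⁻ z in carlSq 0 1, ENNReal.ofReal ((1 / 3 : ℝ) ^ N) ∂(Vm α) := by
          rw [setLIntegral_const]
      _ ≤ ∫⁻ z in carlSq 0 1, ‖tst N 0 1 z‖ₑ ^ (1:ℝ) ∂(Vm α) :=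
          setLIntegral_mono' (measurableSet_carlSq 0 1) fun z hz => by
            rw [ENNReal.rpow_one]; exact tst_lower N hz
      _ ≤ _ := setLIntegral_le_lintegral _ _
  intro h
  rw [h, ENNReal.mul_top (by simp)] at h1
  exact hN (top_le_iff.1 h1)

lemma le_ofReal_toReal_add_one {M : ℝ≥0∞} (hM : M ≠ ∞) : M ≤ ENNReal.ofReal (M.toReal + 1) := by
  conv_lhs => rw [← ENNReal.ofReal_toReal hM]
  exact ENNReal.ofReal_le_ofReal (by linarith)

lemma carleson_of_embedding
    (α₁ α₂ : ℝ) (hα₁ : -1 < α₁) (hα₂ : -1 < α₂)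
    (p q : ℝ) (hp : 1 < p) (hpq : p ≤ q)
    (μ : Measure (ℂ × ℂ)) (C : ℝ)
    (H : ∀ f : ℂ × ℂ → ℂ, DifferentiableOn ℂ f (UHP ×ˢ UHP) →
        (∫⁻ z in UHP ×ˢ UHP, ‖f z‖ₑ ^ q ∂μ) ≤
          ENNReal.ofReal C * (∫⁻ z, ‖f z‖ₑ ^ p ∂((Vm α₁).prod (Vm α₂))) ^ (q / p)) :
    ∃ M : ℝ≥0∞, M ≠ ∞ ∧ ∀ a₁ b₁ a₂ b₂ : ℝ, a₁ < b₁ → a₂ < b₂ →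
        μ (carlSq a₁ b₁ ×ˢ carlSq a₂ b₂) ≤
          M * (Vm α₁ (carlSq a₁ b₁) * Vm α₂ (carlSq a₂ b₂)) ^ (q / p) := by
  have hp0 : 0 < p := by linarith
  have hq0 : 0 < q := by linarith
  have hr0 : 0 < q / p := by positivity
  obtain ⟨N₁, hJ₁⟩ := tst_finite α₁ hα₁ hp.le
  obtain ⟨N₂, hJ₂⟩ := tst_finite α₂ hα₂ hp.le
  set J₁ := ∫⁻ z, ‖tst N₁ 0 1 z‖ₑ ^ p ∂(Vm α₁)
  set J₂ := ∫⁻ z, ‖tst N₂ 0 1 z‖ₑ ^ p ∂(Vm α₂)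
  set V₁ := Vm α₁ (carlSq 0 1) with hV₁
  set V₂ := Vm α₂ (carlSq 0 1) with hV₂
  have v1 : V₁ ≠ 0 := Vm_carlSq_pos α₁
  have v2 : V₂ ≠ 0 := Vm_carlSq_pos α₂
  have v1' : V₁ ≠ ∞ := Vm_carlSq_fin α₁ hα₁
  have v2' : V₂ ≠ ∞ := Vm_carlSq_fin α₂ hα₂
  set c : ℝ≥0∞ := (ENNReal.ofReal ((1 / 3 : ℝ) ^ N₁) * ENNReal.ofReal ((1 / 3 : ℝ) ^ N₂)) ^ q with hc
  have hc0 : c ≠ 0 := by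
    rw [hc, ← ENNReal.ofReal_mul (by positivity), ENNReal.ofReal_rpow_of_pos (by positivity)]
    exact (ENNReal.ofReal_pos.2 (by positivity)).ne'
  have hct : c ≠ ∞ := by
    rw [hc, ← ENNReal.ofReal_mul (by positivity), ENNReal.ofReal_rpow_of_pos (by positivity)]
    exact ENNReal.ofReal_ne_top
  refine ⟨c⁻¹ * (ENNReal.ofReal C * (J₁ / V₁ * (J₂ / V₂)) ^ (q / p)), ?_, ?_⟩
  · refine ENNReal.mul_ne_top (ENNReal.inv_ne_top.2 hc0) (ENNReal.mul_ne_top ENNReal.ofReal_ne_top ?_)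
    exact ENNReal.rpow_ne_top_of_nonneg hr0.le
      (ENNReal.mul_ne_top (ENNReal.div_ne_top hJ₁ v1) (ENNReal.div_ne_top hJ₂ v2))
  intro a₁ b₁ a₂ b₂ h₁ h₂
  have hf : DifferentiableOn ℂ (fun z : ℂ × ℂ => tst N₁ a₁ b₁ z.1 * tst N₂ a₂ b₂ z.2) (UHP ×ˢ UHP) :=
    ((tst_diff N₁ h₁).comp differentiableOn_fst (fun z hz => hz.1)).mul
      ((tst_diff N₂ h₂).comp differentiableOn_snd (fun z hz => hz.2))
  have h := H _ hf
  simp only [enorm_mul] at h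
  have heq_int : ∫⁻ z, (‖tst N₁ a₁ b₁ z.1‖ₑ * ‖tst N₂ a₂ b₂ z.2‖ₑ) ^ p ∂((Vm α₁).prod (Vm α₂)) =
      (J₁ / V₁ * (J₂ / V₂)) * (Vm α₁ (carlSq a₁ b₁) * Vm α₂ (carlSq a₂ b₂)) := by
    simp only [ENNReal.mul_rpow_of_nonneg _ _ hp0.le]
    rw [lintegral_prod_mul ((tst_meas N₁ a₁ b₁).enorm.pow_const p).aemeasurable
      ((tst_meas N₂ a₂ b₂).enorm.pow_const p).aemeasurable, tst_scale α₁ N₁ h₁, tst_scale α₂ N₂ h₂,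
      Vm_carlSq α₁ h₁, Vm_carlSq α₂ h₂, ← hV₁, ← hV₂]
    change ENNReal.ofReal ((b₁ - a₁) ^ (2 + α₁)) * J₁ * (ENNReal.ofReal ((b₂ - a₂) ^ (2 + α₂)) * J₂) = _
    have e1 : J₁ / V₁ * V₁ = J₁ := ENNReal.div_mul_cancel v1 v1'
    have e2 : J₂ / V₂ * V₂ = J₂ := ENNReal.div_mul_cancel v2 v2'
    conv_lhs => rw [← e1, ← e2]
    ring
  rw [heq_int, ENNReal.mul_rpow_of_nonneg _ _ hr0.le, ← mul_assoc] at h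
  have hlow : c * μ (carlSq a₁ b₁ ×ˢ carlSq a₂ b₂) ≤
      ∫⁻ z in UHP ×ˢ UHP, (‖tst N₁ a₁ b₁ z.1‖ₑ * ‖tst N₂ a₂ b₂ z.2‖ₑ) ^ q ∂μ := by
    calc _ = ∫⁻ z in carlSq a₁ b₁ ×ˢ carlSq a₂ b₂, c ∂μ := by rw [setLIntegral_const]
      _ ≤ ∫⁻ z in carlSq a₁ b₁ ×ˢ carlSq a₂ b₂, (‖tst N₁ a₁ b₁ z.1‖ₑ * ‖tst N₂ a₂ b₂ z.2‖ₑ) ^ q ∂μ := by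
          refine setLIntegral_mono' ((measurableSet_carlSq _ _).prod (measurableSet_carlSq _ _)) fun z hz => ?_
          exact ENNReal.rpow_le_rpow (mul_le_mul' (tst_lower N₁ hz.1) (tst_lower N₂ hz.2)) hq0.le
      _ ≤ _ := lintegral_mono_set (prod_mono (fun z hz => hz.2.1) (fun z hz => hz.2.1))
  calc _ = c⁻¹ * (c * μ (carlSq a₁ b₁ ×ˢ carlSq a₂ b₂)) := by
        rw [← mul_assoc, ENNReal.inv_mul_cancel hc0 hct, one_mul]
    _ ≤ c⁻¹ * _ := mul_le_mul' le_rfl (hlow.trans h)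
    _ = _ := by ring

lemma ball_sub_UHP {z : ℂ} (_hz : z ∈ UHP) : Metric.ball z (z.im / 2) ⊆ UHP := fun w hw => by
  rw [Metric.mem_ball, dist_eq_norm] at hw
  have := (Complex.abs_im_le_norm (w - z)).trans_lt hw
  rw [Complex.sub_im, abs_lt] at this
  change 0 < w.im; have h : 0 < z.im := _hz; linarith

lemma submean_prod (α₁ α₂ : ℝ) {p : ℝ} (hp : 1 ≤ p) : ∃ K : ℝ≥0∞, K ≠ ∞ ∧ ∀ f : ℂ × ℂ → ℂ,
    DifferentiableOn ℂ f (UHP ×ˢ UHP) → ∀ z ∈ UHP ×ˢ UHP, ‖f z‖ₑ ^ p ≤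
      K * (ENNReal.ofReal (z.1.im ^ (-(2 + α₁))) * ENNReal.ofReal (z.2.im ^ (-(2 + α₂)))) *
      ∫⁻ w in Metric.ball z.1 (z.1.im / 2) ×ˢ Metric.ball z.2 (z.2.im / 2), ‖f w‖ₑ ^ p
        ∂((Vm α₁).prod (Vm α₂)) := by
  obtain ⟨K₁, _, H₁⟩ := submean_Vm α₁ hp
  obtain ⟨K₂, _, H₂⟩ := submean_Vm α₂ hp
  refine ⟨ENNReal.ofReal K₁ * ENNReal.ofReal K₂, by finiteness, ?_⟩
  rintro f hf ⟨z₁, z₂⟩ ⟨hz₁, hz₂⟩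
  have d₁ : ∀ w₂ ∈ UHP, DifferentiableOn ℂ (fun w => f (w, w₂)) UHP := fun w₂ hw₂ =>
    hf.comp (f := fun w => (w, w₂)) (by fun_prop) (fun w hw => ⟨hw, hw₂⟩)
  have d₂ : ∀ w₁ ∈ UHP, DifferentiableOn ℂ (fun w => f (w₁, w)) UHP := fun w₁ hw₁ =>
    hf.comp (f := fun w => (w₁, w)) (by fun_prop) (fun w hw => ⟨hw₁, hw⟩)
  have hsub : Metric.ball z₁ (z₁.im / 2) ×ˢ Metric.ball z₂ (z₂.im / 2) ⊆ UHP ×ˢ UHP :=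
    prod_mono (ball_sub_UHP hz₁) (ball_sub_UHP hz₂)
  have hms : MeasurableSet (Metric.ball z₁ (z₁.im / 2) ×ˢ Metric.ball z₂ (z₂.im / 2)) :=
    Metric.isOpen_ball.measurableSet.prod Metric.isOpen_ball.measurableSet
  have hm : AEMeasurable (fun w => ‖f w‖ₑ ^ p)
      (((Vm α₁).prod (Vm α₂)).restrict (Metric.ball z₁ (z₁.im / 2) ×ˢ Metric.ball z₂ (z₂.im / 2))) :=
    ((hf.continuousOn.mono hsub).aemeasurable hms).enorm.pow_const p
  rw [← Measure.prod_restrict] at hm ⊢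
  rw [lintegral_prod _ hm]
  calc _ ≤ ENNReal.ofReal K₁ * ENNReal.ofReal (z₁.im ^ (-(2 + α₁))) *
      ∫⁻ w₁ in Metric.ball z₁ (z₁.im / 2), ‖f (w₁, z₂)‖ₑ ^ p ∂(Vm α₁) := H₁ _ (d₁ z₂ hz₂) z₁ hz₁
    _ ≤ ENNReal.ofReal K₁ * ENNReal.ofReal (z₁.im ^ (-(2 + α₁))) *
      ∫⁻ w₁ in Metric.ball z₁ (z₁.im / 2), ENNReal.ofReal K₂ * ENNReal.ofReal (z₂.im ^ (-(2 + α₂))) *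
        ∫⁻ w₂ in Metric.ball z₂ (z₂.im / 2), ‖f (w₁, w₂)‖ₑ ^ p ∂(Vm α₂) ∂(Vm α₁) := by
        refine mul_le_mul' le_rfl ?_
        refine setLIntegral_mono' Metric.isOpen_ball.measurableSet fun w₁ hw₁ => ?_
        exact H₂ _ (d₂ w₁ (ball_sub_UHP hz₁ hw₁)) z₂ hz₂
    _ = _ := by
        rw [lintegral_const_mul' _ _ (by finiteness)]
        ring

lemma ball_geom {z w : ℂ} (hz : z ∈ UHP) (hw : w ∈ Metric.ball z (z.im / 2)) :
    2 / 3 * w.im ≤ z.im ∧ z ∈ carlSq (w.re - 2 * w.im) (w.re + 2 * w.im) := by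
  have hz' : 0 < z.im := hz
  rw [Metric.mem_ball, dist_eq_norm] at hw
  have h1 := (Complex.abs_im_le_norm (w - z)).trans_lt hw
  have h2 := (Complex.abs_re_le_norm (w - z)).trans_lt hw
  rw [Complex.sub_im, abs_lt] at h1
  rw [Complex.sub_re, abs_lt] at h2
  refine ⟨by linarith, ⟨by linarith, by linarith⟩, hz', by linarith⟩

/-- The kernel condition: `w` lies in the bidisc attached to `z`. -/
def kerSet : Set ((ℂ × ℂ) × (ℂ × ℂ)) :=
  {x | dist x.2.1 x.1.1 < x.1.1.im / 2 ∧ dist x.2.2 x.1.2 < x.1.2.im / 2}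

lemma measurableSet_kerSet : MeasurableSet kerSet := by
  have h1 : IsOpen {x : (ℂ × ℂ) × (ℂ × ℂ) | dist x.2.1 x.1.1 < x.1.1.im / 2} :=
    isOpen_lt (by fun_prop) ((Complex.continuous_im.comp (by fun_prop)).div_const 2)
  have h2 : IsOpen {x : (ℂ × ℂ) × (ℂ × ℂ) | dist x.2.2 x.1.2 < x.1.2.im / 2} :=
    isOpen_lt (by fun_prop) ((Complex.continuous_im.comp (by fun_prop)).div_const 2)
  exact (h1.inter h2).measurableSet

lemma sfinite_of_carleson (μ : Measure (ℂ × ℂ))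
    (h : ∀ a b : ℝ, a < b → μ (carlSq a b ×ˢ carlSq a b) < ∞) :
    SFinite (μ.restrict (UHP ×ˢ UHP)) := by
  set s : ℕ → Set (ℂ × ℂ) := fun n => carlSq (-(n+1 : ℝ)) (n+1) ×ˢ carlSq (-(n+1 : ℝ)) (n+1) with hs
  have hms : MeasurableSet (UHP ×ˢ UHP) := isOpen_UHP.measurableSet.prod isOpen_UHP.measurableSet
  have hsm : ∀ n, MeasurableSet (s n) := fun n => (measurableSet_carlSq _ _).prod (measurableSet_carlSq _ _)
  have hcov : UHP ×ˢ UHP ⊆ ⋃ n, s n := by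
    rintro ⟨z, w⟩ ⟨hz, hw⟩
    have hz' : 0 < z.im := hz
    have hw' : 0 < w.im := hw
    obtain ⟨n, hn⟩ := exists_nat_gt (|z.re| + |w.re| + z.im + w.im)
    have h1 := abs_nonneg z.re
    have h2 := abs_nonneg w.re
    have h3 := neg_abs_le z.re
    have h4 := neg_abs_le w.re
    have h5 := le_abs_self z.re
    have h6 := le_abs_self w.re
    refine mem_iUnion.2 ⟨n, ⟨⟨?_, ?_⟩, hz', ?_⟩, ⟨?_, ?_⟩, hw', ?_⟩ <;> dsimp only <;> linarith
  have : SigmaFinite (μ.restrict (UHP ×ˢ UHP)) := by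
    refine ⟨⟨⟨fun n => s n ∪ (UHP ×ˢ UHP)ᶜ, fun _ => trivial, fun n => ?_, ?_⟩⟩⟩
    · rw [Measure.restrict_apply ((hsm n).union hms.compl), union_inter_distrib_right, compl_inter_self,
        union_empty]
      exact (measure_mono inter_subset_left).trans_lt (h _ _ (by have : (0:ℝ) ≤ n := n.cast_nonneg
                                                                 linarith))
    · rw [← iUnion_union, eq_univ_iff_forall]
      intro x
      by_cases hx : x ∈ UHP ×ˢ UHP
      · exact Or.inl (hcov hx)
      · exact Or.inr hx
  infer_instance

lemma embedding_of_carleson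
    (α₁ α₂ : ℝ) (hα₁ : -1 < α₁) (hα₂ : -1 < α₂)
    (p q : ℝ) (hp : 1 < p) (hpq : p ≤ q)
    (μ : Measure (ℂ × ℂ)) (C : ℝ)
    (H : ∀ a₁ b₁ a₂ b₂ : ℝ, a₁ < b₁ → a₂ < b₂ →
        μ (carlSq a₁ b₁ ×ˢ carlSq a₂ b₂) ≤
          ENNReal.ofReal C * (Vm α₁ (carlSq a₁ b₁) * Vm α₂ (carlSq a₂ b₂)) ^ (q / p)) :
    ∃ M : ℝ≥0∞, M ≠ ∞ ∧ ∀ f : ℂ × ℂ → ℂ, DifferentiableOn ℂ f (UHP ×ˢ UHP) →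
        (∫⁻ z in UHP ×ˢ UHP, ‖f z‖ₑ ^ q ∂μ) ≤
          M * (∫⁻ z, ‖f z‖ₑ ^ p ∂((Vm α₁).prod (Vm α₂))) ^ (q / p) := by
  have hp0 : 0 < p := by linarith
  have hr1 : 1 ≤ q / p := (one_le_div hp0).2 hpq
  set r := q / p with hr
  have hr0 : 0 ≤ r := by linarith
  set V₁ := Vm α₁ (carlSq 0 1) with hV₁
  set V₂ := Vm α₂ (carlSq 0 1) with hV₂
  have v1' : V₁ ≠ ∞ := Vm_carlSq_fin α₁ hα₁
  have v2' : V₂ ≠ ∞ := Vm_carlSq_fin α₂ hα₂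
  have hms : MeasurableSet (UHP ×ˢ UHP) := isOpen_UHP.measurableSet.prod isOpen_UHP.measurableSet
  have hsf : SFinite (μ.restrict (UHP ×ˢ UHP)) := by
    refine sfinite_of_carleson μ fun a b hab => (H a b a b hab hab).trans_lt ?_
    rw [Vm_carlSq α₁ hab, Vm_carlSq α₂ hab]
    exact ENNReal.mul_lt_top ENNReal.ofReal_lt_top (ENNReal.rpow_lt_top_of_nonneg hr0 (by finiteness))
  obtain ⟨K, hK, HK⟩ := submean_prod α₁ α₂ hp.le
  -- the weight
  set κ : ℂ × ℂ → ℝ≥0∞ := fun z =>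
    ENNReal.ofReal (z.1.im ^ (-(2 + α₁))) * ENNReal.ofReal (z.2.im ^ (-(2 + α₂))) with hκ
  have hκm : Measurable κ :=
    ((measurable_dens _).comp measurable_fst).mul ((measurable_dens _).comp measurable_snd)
  set D : ℝ≥0∞ := ENNReal.ofReal C * (ENNReal.ofReal (6 ^ (2 + α₁)) * ENNReal.ofReal (6 ^ (2 + α₂)) * (V₁ * V₂)) ^ r
    with hD
  have hDt : D ≠ ∞ := ENNReal.mul_ne_top ENNReal.ofReal_ne_top
    (ENNReal.rpow_ne_top_of_nonneg hr0 (by finiteness))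
  -- the inner integral
  have inner : ∀ w ∈ UHP ×ˢ UHP,
      ∫⁻ z in UHP ×ˢ UHP, kerSet.indicator (fun x => κ x.1 ^ r) (z, w) ∂μ ≤ D := by
    rintro ⟨w₁, w₂⟩ ⟨hw₁, hw₂⟩
    have hw₁' : 0 < w₁.im := hw₁
    have hw₂' : 0 < w₂.im := hw₂
    set Q := carlSq (w₁.re - 2 * w₁.im) (w₁.re + 2 * w₁.im) ×ˢ carlSq (w₂.re - 2 * w₂.im) (w₂.re + 2 * w₂.im) with hQ
    have hQm : MeasurableSet Q := (measurableSet_carlSq _ _).prod (measurableSet_carlSq _ _)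
    set k : ℝ≥0∞ := ENNReal.ofReal ((2 / 3 * w₁.im) ^ (-(2 + α₁))) *
      ENNReal.ofReal ((2 / 3 * w₂.im) ^ (-(2 + α₂))) with hk
    have hμQ := H (w₁.re - 2 * w₁.im) (w₁.re + 2 * w₁.im) (w₂.re - 2 * w₂.im) (w₂.re + 2 * w₂.im)
      (by linarith) (by linarith)
    rw [Vm_carlSq α₁ (by linarith), Vm_carlSq α₂ (by linarith), ← hQ, ← hV₁, ← hV₂] at hμQ
    have comb : ∀ (α y : ℝ), 0 < y → ENNReal.ofReal ((2 / 3 * y) ^ (-(2 + α))) *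
        ENNReal.ofReal ((4 * y) ^ (2 + α)) = ENNReal.ofReal (6 ^ (2 + α)) := by
      intro α y hy
      rw [← ENNReal.ofReal_mul (by positivity), Real.rpow_neg (by positivity), ← Real.inv_rpow (by positivity),
        ← Real.mul_rpow (by positivity) (by positivity)]
      congr 2; field_simp; norm_num
    calc _ ≤ ∫⁻ z in UHP ×ˢ UHP, Q.indicator (fun _ => k ^ r) z ∂μ := by
          refine setLIntegral_mono' hms ?_
          rintro ⟨z₁, z₂⟩ ⟨hz₁, hz₂⟩
          by_cases hx : ((z₁, z₂), (w₁, w₂)) ∈ kerSet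
          swap
          · rw [indicator_of_notMem hx]; exact zero_le
          obtain ⟨g1, g1'⟩ := ball_geom hz₁ (w := w₁) hx.1
          obtain ⟨g2, g2'⟩ := ball_geom hz₂ (w := w₂) hx.2
          rw [indicator_of_mem hx, indicator_of_mem (show (z₁, z₂) ∈ Q from ⟨g1', g2'⟩)]
          refine ENNReal.rpow_le_rpow (mul_le_mul' ?_ ?_) hr0 <;> apply ENNReal.ofReal_le_ofReal
          · exact Real.rpow_le_rpow_of_nonpos (by positivity) g1 (by linarith)
          · exact Real.rpow_le_rpow_of_nonpos (by positivity) g2 (by linarith)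
      _ ≤ ∫⁻ z, Q.indicator (fun _ => k ^ r) z ∂μ := setLIntegral_le_lintegral _ _
      _ = k ^ r * μ Q := by rw [lintegral_indicator_const hQm]
      _ ≤ k ^ r * _ := mul_le_mul' le_rfl hμQ
      _ = D := by
          rw [mul_left_comm, ← ENNReal.mul_rpow_of_nonneg _ _ hr0, hD, ← comb α₁ _ hw₁', ← comb α₂ _ hw₂', hk,
            show w₁.re + 2 * w₁.im - (w₁.re - 2 * w₁.im) = 4 * w₁.im by ring,
            show w₂.re + 2 * w₂.im - (w₂.re - 2 * w₂.im) = 4 * w₂.im by ring]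
          congr 2; ring
  refine ⟨K ^ r * D, ENNReal.mul_ne_top (ENNReal.rpow_ne_top_of_nonneg hr0 hK) hDt, fun f hf => ?_⟩
  set ν := (Vm α₁).prod (Vm α₂) with hν
  set S := ∫⁻ z, ‖f z‖ₑ ^ p ∂ν with hS
  set F : ℂ × ℂ → ℝ≥0∞ := (UHP ×ˢ UHP).indicator fun w => ‖f w‖ₑ ^ p with hF
  have hFm : Measurable F := by
    have h : ContinuousOn (fun w => ‖f w‖ₑ) (UHP ×ˢ UHP) := hf.continuousOn.enorm
    classical
    have h2 := (h.measurable_piecewise (continuousOn_const (c := (0:ℝ≥0∞))) hms).pow_const p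
    convert h2 using 1
    ext w
    by_cases hw : w ∈ UHP ×ˢ UHP
    · simp [hF, hw]
    · simp [hF, hw, hp0]
  have hFS : ∫⁻ w, F w ∂ν ≤ S := lintegral_mono fun w => indicator_le_self _ _ _
  set kk : (ℂ × ℂ) × (ℂ × ℂ) → ℝ≥0∞ := fun x => kerSet.indicator (fun x => κ x.1 ^ r) x * F x.2 with hkk
  have hkm : Measurable kk :=
    (((hκm.comp measurable_fst).pow_const r).indicator measurableSet_kerSet).mul (hFm.comp measurable_snd)
  have pt : ∀ z ∈ UHP ×ˢ UHP, ‖f z‖ₑ ^ q ≤ K ^ r * S ^ (r - 1) * ∫⁻ w, kk (z, w) ∂ν := by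
    intro z hz
    have h1 := HK f hf z hz
    set B := Metric.ball z.1 (z.1.im / 2) ×ˢ Metric.ball z.2 (z.2.im / 2) with hB
    have hBm : MeasurableSet B := Metric.isOpen_ball.measurableSet.prod Metric.isOpen_ball.measurableSet
    have hBU : B ⊆ UHP ×ˢ UHP := prod_mono (ball_sub_UHP hz.1) (ball_sub_UHP hz.2)
    set X := ∫⁻ w in B, ‖f w‖ₑ ^ p ∂ν with hX
    have hXS : X ≤ S := setLIntegral_le_lintegral _ _
    have hXk : κ z ^ r * X = ∫⁻ w, kk (z, w) ∂ν := by
      rw [hX, ← lintegral_indicator hBm, ← lintegral_const_mul']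
      · congr 1; ext w
        by_cases hw : w ∈ B
        · have hw' : (z, w) ∈ kerSet := hw
          simp only [hkk]
          rw [indicator_of_mem hw, indicator_of_mem hw', hF, indicator_of_mem (hBU hw)]
        · have hw' : (z, w) ∉ kerSet := hw
          simp only [hkk]
          rw [indicator_of_notMem hw, indicator_of_notMem hw', mul_zero, zero_mul]
      · exact ENNReal.rpow_ne_top_of_nonneg hr0 (by simp only [hκ]; finiteness)
    calc ‖f z‖ₑ ^ q = (‖f z‖ₑ ^ p) ^ r := by
          rw [← ENNReal.rpow_mul, hr, mul_div_cancel₀ _ hp0.ne']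
      _ ≤ (K * κ z * X) ^ r := ENNReal.rpow_le_rpow h1 hr0
      _ = K ^ r * κ z ^ r * (X ^ (r - 1) * X) := by
          rw [ENNReal.mul_rpow_of_nonneg _ _ hr0, ENNReal.mul_rpow_of_nonneg _ _ hr0]
          congr 1
          conv_rhs => rw [← ENNReal.rpow_one X, ← ENNReal.rpow_mul, one_mul,
            ← ENNReal.rpow_add_of_nonneg _ _ (by linarith) zero_le_one, sub_add_cancel]
      _ ≤ K ^ r * κ z ^ r * (S ^ (r - 1) * X) := by
          gcongr
      _ = K ^ r * S ^ (r - 1) * (κ z ^ r * X) := by ring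
      _ = _ := by rw [hXk]
  calc _ ≤ ∫⁻ z in UHP ×ˢ UHP, K ^ r * S ^ (r - 1) * ∫⁻ w, kk (z, w) ∂ν ∂μ := setLIntegral_mono' hms pt
    _ = K ^ r * S ^ (r - 1) * ∫⁻ z in UHP ×ˢ UHP, ∫⁻ w, kk (z, w) ∂ν ∂μ := by
        rw [lintegral_const_mul _ hkm.lintegral_prod_right']
    _ = K ^ r * S ^ (r - 1) * ∫⁻ w, ∫⁻ z in UHP ×ˢ UHP, kk (z, w) ∂μ ∂ν := by
        rw [lintegral_lintegral_swap hkm.aemeasurable]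
    _ ≤ K ^ r * S ^ (r - 1) * ∫⁻ w, D * F w ∂ν := by
        refine mul_le_mul' le_rfl (lintegral_mono fun w => ?_)
        simp only [hkk]
        by_cases hw : w ∈ UHP ×ˢ UHP
        · rw [lintegral_mul_const]
          · exact mul_le_mul' (inner w hw) le_rfl
          · exact (((hκm.comp measurable_fst).pow_const r).indicator measurableSet_kerSet).comp
              measurable_prodMk_right
        · simp [hF, hw]
    _ = K ^ r * S ^ (r - 1) * (D * ∫⁻ w, F w ∂ν) := by rw [lintegral_const_mul _ hFm]
    _ ≤ K ^ r * S ^ (r - 1) * (D * S) := by gcongr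
    _ = K ^ r * D * (S ^ (r - 1) * S) := by ring
    _ = _ := by
        congr 1
        conv_lhs => rw [← ENNReal.rpow_one S, ← ENNReal.rpow_mul, one_mul,
            ← ENNReal.rpow_add_of_nonneg _ _ (by linarith) zero_le_one, sub_add_cancel]

/-- for `α₁,α₂ > −1`, `1 < p ≤ q < ∞` and a positive measure `μ` on
`Π⁺×Π⁺`, `μ` is a `(q/p, α⃗)`-Carleson measure (i.e. `μ(Q_{I₁}×Q_{I₂}) ≤
C (V_{α₁}(Q_{I₁}) V_{α₂}(Q_{I₂}))^{q/p}` for all intervals) iff the Carleson embedding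
`∫ |f|^q dμ ≤ C (∫ |f|^p dV_{α⃗})^{q/p}` holds for all holomorphic `f` on `Π⁺×Π⁺`. -/
theorem carleson_measure_iff_embedding_prod
    (α₁ α₂ : ℝ) (hα₁ : -1 < α₁) (hα₂ : -1 < α₂)
    (p q : ℝ) (hp : 1 < p) (hpq : p ≤ q)
    (μ : Measure (ℂ × ℂ)) :
    (∃ C : ℝ, 0 < C ∧ ∀ a₁ b₁ a₂ b₂ : ℝ, a₁ < b₁ → a₂ < b₂ →
        μ (carlSq a₁ b₁ ×ˢ carlSq a₂ b₂) ≤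
          ENNReal.ofReal C *
            (Vm α₁ (carlSq a₁ b₁) * Vm α₂ (carlSq a₂ b₂)) ^ (q / p))
    ↔ (∃ C : ℝ, 0 < C ∧ ∀ f : ℂ × ℂ → ℂ, DifferentiableOn ℂ f (UHP ×ˢ UHP) →
        (∫⁻ z in UHP ×ˢ UHP, (‖f z‖₊ : ℝ≥0∞) ^ q ∂μ) ≤
          ENNReal.ofReal C *
            (∫⁻ z, (‖f z‖₊ : ℝ≥0∞) ^ p ∂((Vm α₁).prod (Vm α₂))) ^ (q / p)) := by
  constructor
  · rintro ⟨C, -, H⟩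
    obtain ⟨M, hM, h⟩ := embedding_of_carleson α₁ α₂ hα₁ hα₂ p q hp hpq μ C H
    exact ⟨M.toReal + 1, by positivity, fun f hf => (h f hf).trans
      (mul_le_mul' (le_ofReal_toReal_add_one hM) le_rfl)⟩
  · rintro ⟨C, -, H⟩
    obtain ⟨M, hM, h⟩ := carleson_of_embedding α₁ α₂ hα₁ hα₂ p q hp hpq μ C H
    exact ⟨M.toReal + 1, by positivity, fun a₁ b₁ a₂ b₂ h₁ h₂ => (h a₁ b₁ a₂ b₂ h₁ h₂).trans
      (mul_le_mul' (le_ofReal_toReal_add_one hM) le_rfl)⟩
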